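/- arXiv:0712.3628 — 6 statements merged into one kernel-verified Lean document; each statement's English description precedes it below -/
import Mathlib

section
/- Let d_A > 2 and d_B > 2 be natural numbers such that d_A·d_B is even. Then there exists a linear subspace R of the space of d_A × d_B complex matrices with dim R = d_A·d_B/2 such that neither R nor its orthogonal complement (with respect to the Frobenius inner product) contains a nonzero matrix of rank at most 1. -/
/-!
Split the `d_A d_B` matrix entries into two groups and consider the graphs of linear maps `X` from
the first group of coordinates to the second. Up to scaling, the nonzero product vectors form a
family with `d_A + d_B - 2` parameters, and each of them imposes one linear condition on every row
of `X`. Hence the set of `X` whose graph contains a product vector has positive codimension as soon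
as there are at least `d_A + d_B - 1` rows. The orthogonal complement of the graph of `X` is the
graph of `-Xᴴ` with the two groups of coordinates exchanged, and `X ↦ -Xᴴ` is an isometry, so
that the `X` for which the complement contains a product vector are exceptional as well. Hausdorff
dimension makes the parameter count rigorous: two sets of smaller dimension do not cover the space.
-/

open Matrix Module Set
open scoped ComplexOrder Matrix.Norms.Elementwise

variable {ι κ m n : Type*}

section RankOne

variable {K : Type*} [Field K]

theorem exists_eq_vecMulVec_of_rank_le_one [Fintype n] {M : Matrix m n K} (hM : M.rank ≤ 1) :
    ∃ x y, M = vecMulVec x y := by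
  classical
  obtain ⟨x, hx⟩ := finrank_le_one_iff.mp hM
  have col_mem (j : n) : M.col j ∈ LinearMap.range M.mulVecLin :=
    ⟨Pi.single j 1, mulVec_single_one M j⟩
  choose y hy using fun j => hx ⟨M.col j, col_mem j⟩
  refine ⟨x, y, Matrix.ext fun i j => ?_⟩
  have hij : y j * x.1 i = M i j := congrFun (congrArg Subtype.val (hy j)) i
  rw [vecMulVec_apply, mul_comm, hij]

end RankOne

section NormalizedProduct

variable [DecidableEq m]

/-- The standard affine chart `x a = 1` of the projective space with homogeneous coordinates
indexed by `m`: the remaining coordinates are given by `u`. -/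
def affineChart {R : Type*} [One R] (a : m) (u : {i // i ≠ a} → R) (i : m) : R :=
  if h : i = a then 1 else u ⟨i, h⟩

theorem affineChart_self {R : Type*} [One R] (a : m) (u : {i // i ≠ a} → R) :
    affineChart a u a = 1 :=
  dif_pos rfl

theorem exists_eq_smul_affineChart {K : Type*} [DivisionRing K] {x : m → K} {a : m}
    (hx : x a ≠ 0) : ∃ u, x = x a • affineChart a u := by
  refine ⟨fun i => (x a)⁻¹ * x i, funext fun i => ?_⟩
  by_cases h : i = a
  · simp [affineChart, h]
  · simp [affineChart, h, mul_inv_cancel_left₀ hx]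

theorem contDiff_affineChart {𝕜 : Type*} [RCLike 𝕜] [Fintype m] (a : m) {k : WithTop ℕ∞} :
    ContDiff ℝ k (affineChart a : ({i // i ≠ a} → 𝕜) → m → 𝕜) := by
  refine contDiff_pi.2 fun i => ?_
  unfold affineChart
  split_ifs with h
  · exact contDiff_const
  · exact contDiff_apply ℝ 𝕜 _

variable [DecidableEq n]

/-- The product matrices with entry `1` at `(a, b)`, parametrized by the other coordinates of the
two factors. They represent the nonzero product matrices up to scaling. -/
def normalizedProduct {R : Type*} [MulOneClass R] (a : m) (b : n)
    (t : ({i // i ≠ a} → R) × ({j // j ≠ b} → R)) : Matrix m n R :=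
  vecMulVec (affineChart a t.1) (affineChart b t.2)

theorem normalizedProduct_self {R : Type*} [MulOneClass R] (a : m) (b : n)
    (t : ({i // i ≠ a} → R) × ({j // j ≠ b} → R)) : normalizedProduct a b t a b = 1 := by
  rw [normalizedProduct, vecMulVec_apply, affineChart_self, affineChart_self, mul_one]

theorem exists_vecMulVec_eq_smul_normalizedProduct {K : Type*} [Field K] {x : m → K} {y : n → K}
    {a : m} {b : n} (hx : x a ≠ 0) (hy : y b ≠ 0) :
    ∃ t, vecMulVec x y = (x a * y b) • normalizedProduct a b t := by
  obtain ⟨u, hu⟩ := exists_eq_smul_affineChart hx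
  obtain ⟨v, hv⟩ := exists_eq_smul_affineChart hy
  refine ⟨(u, v), ?_⟩
  rw [normalizedProduct, mul_smul, ← vecMulVec_smul, ← smul_vecMulVec, ← hu, ← hv]

theorem contDiff_normalizedProduct_apply {𝕜 : Type*} [RCLike 𝕜] [Fintype m] [Fintype n]
    (a i : m) (b j : n) {k : WithTop ℕ∞} :
    ContDiff ℝ k fun t : ({i // i ≠ a} → 𝕜) × ({j // j ≠ b} → 𝕜) => normalizedProduct a b t i j :=
  (contDiff_pi.1 ((contDiff_affineChart a).comp contDiff_fst) i).mul
    (contDiff_pi.1 ((contDiff_affineChart b).comp contDiff_snd) j)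

end NormalizedProduct

section Graph

/-- The coordinates of a matrix in two groups, labelled by `ι` and `κ` through `e`. As in
`Matrix.vec`, the column index comes first. -/
noncomputable def splitEntries {R : Type*} [Semiring R] (e : ι ⊕ κ ≃ n × m) :
    Matrix m n R ≃ₗ[R] (ι → R) × (κ → R) :=
  LinearEquiv.ofBijective { toFun := vec, map_add' := vec_add, map_smul' := vec_smul }
      vec_bijective ≪≫ₗ
    LinearEquiv.funCongrLeft R R e ≪≫ₗ LinearEquiv.sumArrowLequivProdArrow ι κ R R

variable [Fintype ι]

/-- The graph of the linear map `(ι → R) → (κ → R)` with matrix `X`, as a space of matrices whose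
entries are labelled by `ι ⊕ κ` through `e`. -/
noncomputable def graphSubmodule {R : Type*} [CommSemiring R] (e : ι ⊕ κ ≃ n × m)
    (X : Matrix κ ι R) : Submodule R (Matrix m n R) :=
  X.mulVecLin.graph.comap (splitEntries e).toLinearMap

theorem mem_graphSubmodule {R : Type*} [CommSemiring R] {e : ι ⊕ κ ≃ n × m}
    {X : Matrix κ ι R} {M : Matrix m n R} :
    M ∈ graphSubmodule e X ↔ (splitEntries e M).2 = X *ᵥ (splitEntries e M).1 :=
  Iff.rfl

theorem finrank_graphSubmodule {R : Type*} [CommRing R] [StrongRankCondition R]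
    (e : ι ⊕ κ ≃ n × m) (X : Matrix κ ι R) :
    finrank R (graphSubmodule e X) = Fintype.card ι := by
  have graph_inj : Function.Injective (LinearMap.id.prod X.mulVecLin) :=
    fun _ _ h => congrArg Prod.fst h
  rw [graphSubmodule, Submodule.comap_equiv_eq_map_symm, LinearEquiv.finrank_map_eq,
    LinearMap.graph_eq_range_prod, LinearMap.finrank_range_of_inj graph_inj, finrank_pi]

theorem trace_conjTranspose_mul_eq_splitEntries {R : Type*} [Semiring R] [StarRing R] [Fintype κ]
    [Fintype m] [Fintype n] (e : ι ⊕ κ ≃ n × m) (M N : Matrix m n R) :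
    (Mᴴ * N).trace = star (splitEntries e M).1 ⬝ᵥ (splitEntries e N).1 +
      star (splitEntries e M).2 ⬝ᵥ (splitEntries e N).2 := by
  rw [← star_vec_dotProduct_vec, ← comp_equiv_dotProduct_comp_equiv _ _ e,
    ← sumElim_dotProduct_sumElim]
  congr 1 <;> exact (Sum.elim_comp_inl_inr _).symm

theorem mem_graphSubmodule_neg_conjTranspose_iff {R : Type*} [CommRing R] [StarRing R]
    [PartialOrder R] [StarOrderedRing R] [NoZeroDivisors R] [Fintype κ] [Fintype m]
    [Fintype n] {e : ι ⊕ κ ≃ n × m} {X : Matrix κ ι R} {N : Matrix m n R} :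
    N ∈ graphSubmodule ((Equiv.sumComm κ ι).trans e) (-Xᴴ) ↔
      ∀ M ∈ graphSubmodule e X, (Mᴴ * N).trace = 0 := by
  set u := (splitEntries e N).1 + Xᴴ *ᵥ (splitEntries e N).2 with hu
  have trace_eq {M : Matrix m n R} (hM : M ∈ graphSubmodule e X) :
      (Mᴴ * N).trace = star (splitEntries e M).1 ⬝ᵥ u := by
    rw [trace_conjTranspose_mul_eq_splitEntries e, mem_graphSubmodule.mp hM, star_mulVec,
      ← dotProduct_mulVec, ← dotProduct_add]
  have mem_iff : N ∈ graphSubmodule ((Equiv.sumComm κ ι).trans e) (-Xᴴ) ↔ u = 0 := by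
    rw [hu, add_eq_zero_iff_eq_neg, ← neg_mulVec]
    rfl
  rw [mem_iff]
  refine ⟨fun h M hM => by rw [trace_eq hM, h, dotProduct_zero], fun h => ?_⟩
  set M := (splitEntries e).symm (u, X *ᵥ u) with hM
  have M_mem : M ∈ graphSubmodule e X := by simp [mem_graphSubmodule, hM]
  simpa [hM] using (trace_eq M_mem).symm.trans (h M M_mem)

end Graph

section FillColumn

variable [Fintype ι]

/-- The matrix with columns `Y` away from `p₀` whose column `p₀` is chosen such that it maps `w`
to `z`, provided that `w p₀ = 1`. -/
def fillColumn [DecidableEq ι] {R : Type*} [Ring R] (p₀ : ι) (w : ι → R)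
    (z : κ → R) (Y : κ → {p // p ≠ p₀} → R) : Matrix κ ι R :=
  of fun q p => if h : p = p₀ then z q - ∑ p' : {p // p ≠ p₀}, Y q p' * w p' else Y q ⟨p, h⟩

theorem fillColumn_mulVec [DecidableEq ι] {R : Type*} [Ring R] {p₀ : ι} {w : ι → R}
    (hw : w p₀ = 1) (X : Matrix κ ι R) : fillColumn p₀ w (X *ᵥ w) (fun q p => X q p) = X := by
  ext q p
  by_cases h : p = p₀
  · subst h
    simp [fillColumn, mulVec, dotProduct, Fintype.sum_eq_add_sum_subtype_ne _ p, hw]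
  · simp [fillColumn, h]

variable {𝕜 E : Type*} [RCLike 𝕜] [NormedAddCommGroup E] [NormedSpace ℝ E] [Fintype κ]

theorem contDiff_fillColumn [DecidableEq ι] {k : WithTop ℕ∞} (p₀ : ι) {w : E → ι → 𝕜}
    {z : E → κ → 𝕜} {Y : E → κ → {p // p ≠ p₀} → 𝕜} (hw : ContDiff ℝ k w) (hz : ContDiff ℝ k z)
    (hY : ContDiff ℝ k Y) : ContDiff ℝ k fun t => fillColumn p₀ (w t) (z t) (Y t) := by
  refine contDiff_pi.2 fun q => contDiff_pi.2 fun p => ?_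
  have hYq := contDiff_pi.1 (contDiff_pi.1 hY q)
  simp only [fillColumn, of_apply]
  split_ifs
  · exact (contDiff_pi.1 hz q).sub (ContDiff.sum fun p' _ => (hYq p').mul (contDiff_pi.1 hw p'))
  · exact hYq _

theorem dimH_setOf_exists_eq_mulVec_le [FiniteDimensional ℝ E] {p₀ : ι} {w : E → ι → 𝕜}
    {z : E → κ → 𝕜} (hw : ContDiff ℝ 1 w) (hz : ContDiff ℝ 1 z) (hw₀ : ∀ t, w t p₀ = 1) :
    dimH {X : Matrix κ ι 𝕜 | ∃ t, z t = X *ᵥ w t} ≤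
      (finrank ℝ E + Fintype.card κ * ((Fintype.card ι - 1) * finrank ℝ 𝕜) : ℕ) := by
  classical
  let φ (s : E × (κ → {p // p ≠ p₀} → 𝕜)) : Matrix κ ι 𝕜 := fillColumn p₀ (w s.1) (z s.1) s.2
  have hφ : ContDiff ℝ 1 φ :=
    contDiff_fillColumn p₀ (hw.comp contDiff_fst) (hz.comp contDiff_fst) contDiff_snd
  have subset_range : {X : Matrix κ ι 𝕜 | ∃ t, z t = X *ᵥ w t} ⊆ range φ := by
    rintro X ⟨t, ht⟩
    exact ⟨(t, fun q p => X q p), by simp only [φ, ht, fillColumn_mulVec (hw₀ t)]⟩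
  refine (dimH_mono subset_range).trans (hφ.dimH_range_le.trans_eq ?_)
  simp [finrank_pi_fintype]

theorem dimH_setOf_exists_mem_graphSubmodule_le [FiniteDimensional ℝ E] {e : ι ⊕ κ ≃ n × m}
    {p₀ : ι} {F : E → Matrix m n 𝕜} (hF : ∀ i j, ContDiff ℝ 1 fun t => F t i j)
    (hF₀ : ∀ t, F t (e (.inl p₀)).2 (e (.inl p₀)).1 = 1) :
    dimH {X : Matrix κ ι 𝕜 | ∃ t, F t ∈ graphSubmodule e X} ≤
      (finrank ℝ E + Fintype.card κ * ((Fintype.card ι - 1) * finrank ℝ 𝕜) : ℕ) :=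
  dimH_setOf_exists_eq_mulVec_le (w := fun t => (splitEntries e (F t)).1)
    (z := fun t => (splitEntries e (F t)).2) (contDiff_pi.2 fun _ => hF _ _)
    (contDiff_pi.2 fun _ => hF _ _) hF₀

end FillColumn

section ProductGraphs

variable [Fintype ι] [Fintype n]

/-- The exceptional set of the construction: the matrices `X` whose graph contains a nonzero matrix
of rank at most one. -/
def productGraphs (K : Type*) [Field K] (e : ι ⊕ κ ≃ n × m) : Set (Matrix κ ι K) :=
  {X | ∃ M ∈ graphSubmodule e X, M ≠ 0 ∧ M.rank ≤ 1}

theorem productGraphs_subset {K : Type*} [Field K] [DecidableEq m] [DecidableEq n]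
    (e : ι ⊕ κ ≃ n × m) :
    productGraphs K e ⊆
      ⋃ p, {X | ∃ t, normalizedProduct (e (.inl p)).2 (e (.inl p)).1 t ∈ graphSubmodule e X} := by
  rintro X ⟨M, hMX, hM₀, hM⟩
  obtain ⟨x, y, rfl⟩ := exists_eq_vecMulVec_of_rank_le_one hM
  have fst_ne_zero : (splitEntries e (vecMulVec x y)).1 ≠ 0 := by
    intro fst_eq_zero
    have snd_eq_zero := mem_graphSubmodule.mp hMX
    rw [fst_eq_zero, mulVec_zero] at snd_eq_zero
    exact hM₀ ((splitEntries e).map_eq_zero_iff.mp (Prod.ext fst_eq_zero snd_eq_zero))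
  obtain ⟨p, hp⟩ := Function.ne_iff.mp fst_ne_zero
  have hxy : x (e (.inl p)).2 * y (e (.inl p)).1 ≠ 0 := hp
  obtain ⟨t, ht⟩ := exists_vecMulVec_eq_smul_normalizedProduct (left_ne_zero_of_mul hxy)
    (right_ne_zero_of_mul hxy)
  rw [ht, Submodule.smul_mem_iff _ hxy] at hMX
  exact mem_iUnion.2 ⟨p, t, hMX⟩

variable {𝕜 : Type*} [RCLike 𝕜] [Fintype κ] [Fintype m]

theorem dimH_productGraphs_le (e : ι ⊕ κ ≃ n × m) :
    dimH (productGraphs 𝕜 e) ≤ (((Fintype.card m - 1) + (Fintype.card n - 1) +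
      Fintype.card κ * (Fintype.card ι - 1)) * finrank ℝ 𝕜 : ℕ) := by
  classical
  refine (dimH_mono (productGraphs_subset e)).trans ?_
  rw [dimH_iUnion]
  refine iSup_le fun p => ?_
  refine (dimH_setOf_exists_mem_graphSubmodule_le
    (contDiff_normalizedProduct_apply _ · _ ·) (normalizedProduct_self _ _)).trans_eq ?_
  simp only [finrank_prod, finrank_pi_fintype, Finset.sum_const, Finset.card_univ, smul_eq_mul,
    Fintype.card_subtype_compl, Fintype.card_unique]
  ring_nf

theorem dimH_productGraphs_lt_finrank [Nonempty ι] (e : ι ⊕ κ ≃ n × m)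
    (h : Fintype.card m - 1 + (Fintype.card n - 1) < Fintype.card κ) :
    dimH (productGraphs 𝕜 e) < finrank ℝ (Matrix κ ι 𝕜) := by
  refine (dimH_productGraphs_le e).trans_lt (Nat.cast_lt.2 ?_)
  rw [finrank_matrix]
  refine Nat.mul_lt_mul_of_pos_right ?_ finrank_pos
  obtain ⟨r, hr⟩ := Nat.exists_eq_add_one.2 (Fintype.card_pos (α := ι))
  rw [hr, Nat.add_sub_cancel, mul_add_one]
  omega

theorem exists_notMem_productGraphs (e : ι ⊕ κ ≃ n × m)
    (hι : Fintype.card m - 1 + (Fintype.card n - 1) < Fintype.card ι)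
    (hκ : Fintype.card m - 1 + (Fintype.card n - 1) < Fintype.card κ) :
    ∃ X, X ∉ productGraphs 𝕜 e ∧ -Xᴴ ∉ productGraphs 𝕜 ((Equiv.sumComm κ ι).trans e) := by
  have : Nonempty ι := Fintype.card_pos_iff.1 (by omega)
  have : Nonempty κ := Fintype.card_pos_iff.1 (by omega)
  let f (Y : Matrix ι κ 𝕜) : Matrix κ ι 𝕜 := -Yᴴ
  have hf : Isometry f := .of_dist_eq fun Y Z => by
    rw [dist_eq_norm, dist_eq_norm, neg_sub_neg, ← conjTranspose_sub, norm_conjTranspose,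
      norm_sub_rev]
  set B := productGraphs 𝕜 e
  set B' := productGraphs 𝕜 ((Equiv.sumComm κ ι).trans e)
  have dimH_image : dimH (f '' B') < finrank ℝ (Matrix κ ι 𝕜) := by
    rw [hf.dimH_image, finrank_matrix, mul_comm (Fintype.card κ), ← finrank_matrix]
    exact dimH_productGraphs_lt_finrank _ hι
  have dimH_union_lt : dimH (B ∪ f '' B') < finrank ℝ (Matrix κ ι 𝕜) := by
    rw [dimH_union]
    exact max_lt (dimH_productGraphs_lt_finrank e hκ) dimH_image
  obtain ⟨X, hX⟩ := (dense_compl_of_dimH_lt_finrank dimH_union_lt).nonempty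
  rw [compl_union] at hX
  exact ⟨X, hX.1, fun h => hX.2 ⟨-Xᴴ, h, by simp [f]⟩⟩

end ProductGraphs

theorem stmt0_general {𝕜 : Type*} [RCLike 𝕜] [Fintype m] [Fintype n] {r : ℕ}
    (hr : Fintype.card m - 1 + (Fintype.card n - 1) < r)
    (hr' : r + (Fintype.card m - 1 + (Fintype.card n - 1)) < Fintype.card m * Fintype.card n) :
    ∃ R : Submodule 𝕜 (Matrix m n 𝕜),
      finrank 𝕜 R = r ∧
      (∀ M ∈ R, M ≠ 0 → ¬ (M.rank ≤ 1)) ∧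
      (∀ N : Matrix m n 𝕜, (∀ M ∈ R, (Mᴴ * N).trace = 0) → N ≠ 0 → ¬ (N.rank ≤ 1)) := by
  obtain ⟨k, hk⟩ := Nat.exists_eq_add_of_lt ((Nat.le_add_right r _).trans_lt hr')
  have e : Fin r ⊕ Fin (k + 1) ≃ n × m :=
    Fintype.equivOfCardEq (by simp [mul_comm (Fintype.card n), hk, add_assoc])
  obtain ⟨X, hX, hX'⟩ :=
    exists_notMem_productGraphs (𝕜 := 𝕜) e (by simpa using hr) (by rw [Fintype.card_fin]; omega)
  refine ⟨graphSubmodule e X, by simp [finrank_graphSubmodule], ?_, ?_⟩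
  · exact fun M hM hM₀ hrank => hX ⟨M, hM, hM₀, hrank⟩
  · exact fun N hN hN₀ hrank => hX' ⟨N, mem_graphSubmodule_neg_conjTranspose_iff.2 hN, hN₀, hrank⟩

/-- For `d_A > 2`, `d_B > 2` with `d_A * d_B` even, there is a subspace `R`
of the `d_A × d_B` complex matrices with `dim R = d_A * d_B / 2` such that neither `R`
nor its orthogonal complement (w.r.t. the Frobenius inner product `⟨M,N⟩ = tr(Mᴴ N)`)
contains a nonzero matrix of rank at most 1. -/
theorem stmt0 (dA dB : ℕ) (hA : 2 < dA) (hB : 2 < dB) (hEven : Even (dA * dB)) :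
    ∃ R : Submodule ℂ (Matrix (Fin dA) (Fin dB) ℂ),
      Module.finrank ℂ R = dA * dB / 2 ∧
      (∀ M ∈ R, M ≠ 0 → ¬ (M.rank ≤ 1)) ∧
      (∀ N : Matrix (Fin dA) (Fin dB) ℂ,
        (∀ M ∈ R, (Mᴴ * N).trace = 0) → N ≠ 0 → ¬ (N.rank ≤ 1)) := by
  have card_lt : 2 * (dA + dB) < dA * dB + 4 := by nlinarith
  have two_dvd : 2 ∣ dA * dB := hEven.two_dvd
  apply stmt0_general <;> simp only [Fintype.card_fin] <;> omega
end

section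
/- Let d_A, d_B, d_E be natural numbers with d_A·d_B > d_A + d_B + d_E − 2, and fix a linear subspace V₀ of ℂ^{d_A·d_B} ≅ ℂ^{d_A} ⊗ ℂ^{d_B} with dim V₀ = d_E. With respect to the Haar probability measure on the unitary group U(d_A·d_B), the set of unitaries U such that the image subspace U(V₀) contains a nonzero product vector (i.e., a nonzero vector of the form a ⊗ b with a ∈ ℂ^{d_A}, b ∈ ℂ^{d_B}) has measure zero. -/
open Matrix MeasureTheory

/-- The unitary group `U(n)` carries the Borel σ-algebra of its (subspace) topology. -/
noncomputable instance (n : Type*) [Fintype n] [DecidableEq n] :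
    MeasurableSpace (Matrix.unitaryGroup n ℂ) := borel _

instance (n : Type*) [Fintype n] [DecidableEq n] :
    BorelSpace (Matrix.unitaryGroup n ℂ) := ⟨rfl⟩

/-
The product vectors in `ℂ^A ⊗ ℂ^B` form a cone of complex dimension `|A| + |B| - 1`. A tuple of
`d` vectors with a nontrivial linear combination in a cone of complex dimension `m` has, after
rescaling, one entry determined by the other `d - 1` entries, by `d - 1` coefficients and by a
point of the cone. When `m + d - 1 < dim E` such tuples are therefore a smooth image of a space of
smaller dimension than that of all tuples, so they are Lebesgue null.

Unitaries preserve Lebesgue null sets of tuples, so by Fubini almost every tuple `M` is such that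
`U M` has no combination in the cone for almost every `U`. Choose such an `M` that is linearly
independent and of length `dim V`. Its span is `W V` for some unitary `W`, and right translation
by `W` preserves null sets of the unitary group.
-/

section NullSets

theorem measure_range_eq_zero_of_contDiff {D E : Type*}
    [NormedAddCommGroup D] [NormedSpace ℝ D] [FiniteDimensional ℝ D]
    [NormedAddCommGroup E] [NormedSpace ℝ E] [FiniteDimensional ℝ E]
    [MeasurableSpace E] [BorelSpace E] (ν : Measure E) [ν.IsAddHaarMeasure]
    {f : D → E} (hf : ContDiff ℝ 1 f) (hdim : Module.finrank ℝ D < Module.finrank ℝ E) :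
    ν (Set.range f) = 0 := by
  have : ProperSpace E := FiniteDimensional.proper_real E
  have hdimH : dimH (Set.range f) < ((Module.finrank ℝ E : NNReal) : ENNReal) :=
    hf.dimH_range_le.trans_lt (by simpa using hdim)
  refine Measure.absolutelyContinuous_isAddHaarMeasure ν
    (Measure.hausdorffMeasure (Module.finrank ℝ E)) ?_
  simpa using hausdorffMeasure_of_dimH_lt hdimH

theorem ae_ae_notMem_of_quasiMeasurePreserving {α β γ : Type*} [MeasurableSpace α]
    [MeasurableSpace β] [MeasurableSpace γ] (μ : Measure α) {ν : Measure β} {τ : Measure γ}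
    [SFinite μ] [SFinite ν] {f : α → β → γ} (hf : Measurable (Function.uncurry f))
    (hpres : ∀ a, Measure.QuasiMeasurePreserving (f a) ν τ) {s : Set γ} (hs : τ s = 0) :
    ∀ᵐ b ∂ν, ∀ᵐ a ∂μ, f a b ∉ s := by
  have hmeas : MeasurableSet {x : α × β | f x.1 x.2 ∉ toMeasurable τ s} :=
    hf (measurableSet_toMeasurable τ s).compl
  have hae : ∀ᵐ a ∂μ, ∀ᵐ b ∂ν, f a b ∉ toMeasurable τ s :=
    .of_forall fun a ↦ measure_eq_zero_iff_ae_notMem.1 <|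
      (hpres a).preimage_null ((measure_toMeasurable s).trans hs)
  filter_upwards [(Measure.ae_ae_comm hmeas).1 hae] with b hb
  filter_upwards [hb] with a ha using fun h ↦ ha (subset_toMeasurable τ s h)

end NullSets

section Tuples

theorem contDiff_funSplitAt_symm {ι E : Type*} [Fintype ι] [DecidableEq ι]
    [NormedAddCommGroup E] [NormedSpace ℝ E] (p : ι) {n : WithTop ℕ∞} :
    ContDiff ℝ n (Equiv.funSplitAt p E).symm := by
  refine contDiff_pi.2 fun j ↦ ?_
  by_cases hj : j = p
  · simpa [Equiv.funSplitAt, Equiv.piSplitAt, hj] using contDiff_fst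
  · simp only [Equiv.funSplitAt_symm_apply, hj, dite_false]
    fun_prop

/-- The tuples of vectors with a nontrivial linear combination in `C`. A linearly independent tuple
belongs to it exactly when its span contains a nonzero vector of `C`. -/
def tuplesWithCombinationIn (𝕜 ι : Type*) {E : Type*} [Fintype ι] [Semiring 𝕜] [AddCommMonoid E]
    [Module 𝕜 E] (C : Set E) : Set (ι → E) :=
  {M | ∃ x : ι → 𝕜, x ≠ 0 ∧ ∑ i, x i • M i ∈ C}

variable {𝕜 ι D E : Type*} [NormedField 𝕜] [NormedAlgebra ℝ 𝕜] [FiniteDimensional ℝ 𝕜]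
  [Fintype ι] [NormedAddCommGroup D] [NormedSpace ℝ D] [FiniteDimensional ℝ D]
  [NormedAddCommGroup E] [NormedSpace ℝ E] [FiniteDimensional ℝ E] [NormedSpace 𝕜 E]
  [IsScalarTower ℝ 𝕜 E] [MeasurableSpace E] [BorelSpace E]
  (ν : Measure (ι → E)) [ν.IsAddHaarMeasure] {f : D → E}

theorem measure_setOf_exists_eq_one_sum_smul_mem_range_eq_zero (p : ι) (hf : ContDiff ℝ 1 f)
    (hdim : Module.finrank ℝ D + Fintype.card ι * Module.finrank ℝ 𝕜 <
      Module.finrank ℝ E + Module.finrank ℝ 𝕜) :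
    ν {M | ∃ x : ι → 𝕜, x p = 1 ∧ ∑ i, x i • M i ∈ Set.range f} = 0 := by
  classical
  let F : D × ({i // i ≠ p} → 𝕜) × ({i // i ≠ p} → E) → ι → E := fun y ↦
    (Equiv.funSplitAt p E).symm (f y.1 - ∑ i, y.2.1 i • y.2.2 i, y.2.2)
  have hF : ContDiff ℝ 1 F :=
    (contDiff_funSplitAt_symm p).comp (by fun_prop)
  refine measure_mono_null ?_ (measure_range_eq_zero_of_contDiff ν hF ?_)
  · rintro M ⟨x, hxp, t, ht⟩
    refine ⟨(t, fun i ↦ x i, fun i ↦ M i), (Equiv.symm_apply_eq _).2 (Prod.ext ?_ rfl)⟩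
    change f t - ∑ i : {i // i ≠ p}, x i • M i = M p
    rw [ht, Fintype.sum_eq_add_sum_subtype_ne _ p, hxp, one_smul, add_sub_cancel_right]
  · obtain ⟨m, hm⟩ := Nat.exists_eq_add_of_lt (Fintype.card_pos_iff.2 ⟨p⟩)
    simp only [Module.finrank_prod, Module.finrank_pi_fintype, Finset.sum_const,
      Finset.card_univ, smul_eq_mul, Fintype.card_subtype_compl, Fintype.card_subtype_eq, ne_eq,
      hm] at hdim ⊢
    simp only [zero_add, Nat.add_sub_cancel, add_mul, one_mul] at hdim ⊢
    omega

theorem measure_tuplesWithCombinationIn_range_eq_zero (hf : ContDiff ℝ 1 f)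
    (hcone : ∀ c : 𝕜, ∀ y ∈ Set.range f, c • y ∈ Set.range f)
    (hdim : Module.finrank ℝ D + Fintype.card ι * Module.finrank ℝ 𝕜 <
      Module.finrank ℝ E + Module.finrank ℝ 𝕜) :
    ν (tuplesWithCombinationIn 𝕜 ι (Set.range f)) = 0 := by
  refine measure_mono_null ?_ (measure_iUnion_null fun p ↦
    measure_setOf_exists_eq_one_sum_smul_mem_range_eq_zero (𝕜 := 𝕜) ν p hf hdim)
  rintro M ⟨x, hx, hxM⟩
  obtain ⟨p, hp⟩ := Function.ne_iff.1 hx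
  refine Set.mem_iUnion.2 ⟨p, (x p)⁻¹ • x, inv_mul_cancel₀ hp, ?_⟩
  simpa only [Pi.smul_apply, smul_assoc, Finset.smul_sum] using hcone (x p)⁻¹ _ hxM

end Tuples

section Unitary

theorem exists_linearIsometryEquiv_map_eq {𝕜 E : Type*} [RCLike 𝕜] [NormedAddCommGroup E]
    [InnerProductSpace 𝕜 E] [FiniteDimensional 𝕜 E] {S T : Submodule 𝕜 E}
    (h : Module.finrank 𝕜 S = Module.finrank 𝕜 T) :
    ∃ F : E ≃ₗᵢ[𝕜] E, S.map F.toLinearMap = T := by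
  let g : S ≃ₗᵢ[𝕜] T := (stdOrthonormalBasis 𝕜 S).equiv (stdOrthonormalBasis 𝕜 T) (finCongr h)
  let L : S →ₗᵢ[𝕜] E := T.subtypeₗᵢ.comp g.toLinearIsometry
  refine ⟨L.extend.toLinearIsometryEquiv rfl, Submodule.eq_of_le_of_finrank_eq ?_ ?_⟩
  · rintro _ ⟨v, hv, rfl⟩
    have : L.extend v = g ⟨v, hv⟩ := L.extend_apply ⟨v, hv⟩
    exact this ▸ (g ⟨v, hv⟩).2
  · exact (LinearEquiv.finrank_map_eq _ S).trans h

theorem exists_unitaryGroup_map_mulVecLin_eq {𝕜 n : Type*} [RCLike 𝕜] [Fintype n] [DecidableEq n]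
    {S T : Submodule 𝕜 (n → 𝕜)} (h : Module.finrank 𝕜 S = Module.finrank 𝕜 T) :
    ∃ W : unitaryGroup n 𝕜, S.map W.1.mulVecLin = T := by
  let e : EuclideanSpace 𝕜 n ≃ₗ[𝕜] (n → 𝕜) := WithLp.linearEquiv 2 𝕜 (n → 𝕜)
  let b := EuclideanSpace.basisFun n 𝕜
  obtain ⟨F, hF⟩ := exists_linearIsometryEquiv_map_eq (S := S.map e.symm.toLinearMap)
    (T := T.map e.symm.toLinearMap) (by simpa only [LinearEquiv.finrank_map_eq] using h)
  refine ⟨⟨_, F.toMatrix_mem_unitaryGroup b b⟩, ?_⟩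
  have hmul : (LinearMap.toMatrix b.toBasis b.toBasis F.toLinearMap).mulVecLin =
      e.toLinearMap ∘ₗ F.toLinearMap ∘ₗ e.symm.toLinearMap :=
    LinearMap.ext fun v ↦
      LinearMap.toMatrix_mulVec_repr b.toBasis b.toBasis F.toLinearMap (e.symm v)
  calc S.map (LinearMap.toMatrix b.toBasis b.toBasis F.toLinearMap).mulVecLin
      = ((S.map e.symm.toLinearMap).map F.toLinearMap).map e.toLinearMap := by
        rw [hmul, Submodule.map_comp, Submodule.map_comp]
    _ = T := by rw [hF, ← Submodule.map_comp]; simp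

variable {n : Type*} [Fintype n] [DecidableEq n]

theorem quasiMeasurePreserving_mulVec_tuple {ι : Type*} [Finite ι] (U : unitaryGroup n ℂ)
    (ν : Measure (ι → n → ℂ)) [ν.IsAddHaarMeasure] :
    Measure.QuasiMeasurePreserving (fun M i ↦ U.1 *ᵥ M i) ν ν := by
  cases nonempty_fintype ι
  let L : (ι → n → ℂ) ≃ₗ[ℝ] (ι → n → ℂ) :=
    LinearEquiv.piCongrRight fun _ ↦ (UnitaryGroup.toLinearEquiv U).restrictScalars ℝ
  exact Measure.LinearMap.quasiMeasurePreserving ν L.toLinearMap L.isUnit_det'.ne_zero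

theorem continuous_mulVec_tuple {ι : Type*} :
    Continuous (Function.uncurry fun (U : unitaryGroup n ℂ) (M : ι → n → ℂ) i ↦ U.1 *ᵥ M i) := by
  refine continuous_pi fun i ↦ Continuous.matrix_mulVec ?_ ?_
  · fun_prop
  · fun_prop

instance : SecondCountableTopology (unitaryGroup n ℂ) :=
  have : SecondCountableTopology (Matrix n n ℂ) :=
    inferInstanceAs (SecondCountableTopology (n → n → ℂ))
  Topology.IsEmbedding.subtypeVal.secondCountableTopology

theorem exists_linearIndependent_ae_mulVec_notMem (μ : Measure (unitaryGroup n ℂ)) [SFinite μ]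
    {d : ℕ} (hd : d ≤ Fintype.card n) {s : Set (Fin d → n → ℂ)} (hs : Measure.addHaar s = 0) :
    ∃ M : Fin d → n → ℂ, LinearIndependent ℂ M ∧
      ∀ᵐ U : unitaryGroup n ℂ ∂μ, (fun i ↦ U.1 *ᵥ M i) ∉ s := by
  have hae := ae_ae_notMem_of_quasiMeasurePreserving μ continuous_mulVec_tuple.measurable
    (fun U ↦ quasiMeasurePreserving_mulVec_tuple U Measure.addHaar) hs
  have hindep : ∃ M : Fin d → n → ℂ, LinearIndependent ℂ M :=
    exists_linearIndependent_of_le_finrank (hd.trans_eq (Module.finrank_fintype_fun_eq_card ℂ).symm)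
  obtain ⟨M, hM, hMindep⟩ := (Measure.dense_of_ae hae).exists_mem_open
    isOpen_setOfPred_linearIndependent hindep
  exact ⟨M, hMindep, hM⟩

theorem measure_setOf_exists_mem_map_mem_range_eq_zero (μ : Measure (unitaryGroup n ℂ)) [SFinite μ]
    [μ.IsMulLeftInvariant] (V : Submodule ℂ (n → ℂ)) {D : Type*} [NormedAddCommGroup D]
    [NormedSpace ℝ D] [FiniteDimensional ℝ D] {f : D → n → ℂ} (hf : ContDiff ℝ 1 f)
    (hcone : ∀ c : ℂ, ∀ y ∈ Set.range f, c • y ∈ Set.range f)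
    (hdim : Module.finrank ℝ D + 2 * Module.finrank ℂ V < 2 * Fintype.card n + 2) :
    μ {U | ∃ v ∈ V.map U.1.mulVecLin, v ≠ 0 ∧ v ∈ Set.range f} = 0 := by
  have hnull : Measure.addHaar
      (tuplesWithCombinationIn ℂ (Fin (Module.finrank ℂ V)) (Set.range f)) = 0 := by
    refine measure_tuplesWithCombinationIn_range_eq_zero _ hf hcone ?_
    rw [Fintype.card_fin, Complex.finrank_real_complex, finrank_real_of_complex (n → ℂ),
      Module.finrank_fintype_fun_eq_card]
    omega
  have hV := V.finrank_le
  rw [Module.finrank_fintype_fun_eq_card] at hV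
  obtain ⟨M, hMindep, hM⟩ := exists_linearIndependent_ae_mulVec_notMem μ hV hnull
  obtain ⟨W, hW⟩ : ∃ W : unitaryGroup n ℂ, V.map W.1.mulVecLin = Submodule.span ℂ (Set.range M) :=
    exists_unitaryGroup_map_mulVecLin_eq (by simp [finrank_span_eq_card hMindep])
  rw [← measure_mul_right_null μ W]
  refine measure_mono_null (fun U hU ↦ ?_) hM
  obtain ⟨_, ⟨v, hv, rfl⟩, hne, hrange⟩ := hU
  obtain ⟨x, hx⟩ : ∃ x : Fin (Module.finrank ℂ V) → ℂ, ∑ i, x i • M i = W.1 *ᵥ v :=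
    (Submodule.mem_span_range_iff_exists_fun ℂ).1 (hW ▸ Submodule.mem_map_of_mem hv)
  have hUW : (U * W).1.mulVecLin v = ∑ i, x i • U.1 *ᵥ M i :=
    calc (U * W).1 *ᵥ v = U.1 *ᵥ W.1 *ᵥ v := (Matrix.mulVec_mulVec v U.1 W.1).symm
      _ = ∑ i, x i • U.1 *ᵥ M i := by
        rw [← hx, Matrix.mulVec_sum]
        simp only [Matrix.mulVec_smul]
  refine not_not.2 ⟨x, ?_, hUW ▸ hrange⟩
  rintro rfl
  exact hne (hUW.trans (by simp))

end Unitary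

section ProductVectors

variable {A B : Type*} [DecidableEq A]

/-- The product vector `a ⊗ b` with `a k = 1`, in terms of the other entries of `a`. The
normalization removes the scaling redundancy of `(a, b) ↦ a ⊗ b`. -/
def normalizedProductVector (k : A) (x : ({j // j ≠ k} → ℂ) × (B → ℂ)) : A × B → ℂ :=
  fun p ↦ (Equiv.funSplitAt k ℂ).symm (1, x.1) p.1 * x.2 p.2

theorem contDiff_normalizedProductVector [Fintype A] [Fintype B] (k : A) {n : WithTop ℕ∞} :
    ContDiff ℝ n (normalizedProductVector (B := B) k) := by
  refine contDiff_pi.2 fun p ↦ ContDiff.mul ?_ (by fun_prop)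
  exact (contDiff_pi.1 (contDiff_funSplitAt_symm k) p.1).comp (by fun_prop)

theorem smul_mem_range_normalizedProductVector (k : A) (c : ℂ) {v : A × B → ℂ}
    (hv : v ∈ Set.range (normalizedProductVector k)) :
    c • v ∈ Set.range (normalizedProductVector k) := by
  obtain ⟨⟨a, b⟩, rfl⟩ := hv
  exact ⟨(a, c • b), funext fun p ↦ mul_left_comm _ c (b p.2)⟩

theorem mul_mem_range_normalizedProductVector {k : A} {a : A → ℂ} (hk : a k ≠ 0) (b : B → ℂ) :
    (fun p : A × B ↦ a p.1 * b p.2) ∈ Set.range (normalizedProductVector k) := by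
  refine ⟨(fun j ↦ (a k)⁻¹ * a j, a k • b), funext fun p ↦ ?_⟩
  have ha : (Equiv.funSplitAt k ℂ).symm (1, fun j ↦ (a k)⁻¹ * a j) = (a k)⁻¹ • a :=
    (Equiv.symm_apply_eq _).2 (Prod.ext (inv_mul_cancel₀ hk).symm rfl)
  simp only [normalizedProductVector, ha, Pi.smul_apply, smul_eq_mul]
  field_simp

end ProductVectors

theorem stmt1_general {A B : Type*} [Fintype A] [DecidableEq A] [Fintype B] [DecidableEq B]
    (V : Submodule ℂ (A × B → ℂ))
    (h : Fintype.card A + Fintype.card B + Module.finrank ℂ V <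
      Fintype.card A * Fintype.card B + 2)
    (μ : Measure (unitaryGroup (A × B) ℂ)) [SFinite μ] [μ.IsMulLeftInvariant] :
    μ {U | ∃ v ∈ V.map U.1.mulVecLin,
      v ≠ 0 ∧ ∃ (a : A → ℂ) (b : B → ℂ), v = fun p ↦ a p.1 * b p.2} = 0 := by
  have hdim (k : A) : Module.finrank ℝ (({j // j ≠ k} → ℂ) × (B → ℂ)) +
      2 * Module.finrank ℂ V < 2 * Fintype.card (A × B) + 2 := by
    have hA : 0 < Fintype.card A := Fintype.card_pos_iff.2 ⟨k⟩
    rw [finrank_real_of_complex, Module.finrank_prod, Module.finrank_fintype_fun_eq_card,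
      Module.finrank_fintype_fun_eq_card, Fintype.card_prod, Fintype.card_subtype_compl,
      Fintype.card_subtype_eq]
    omega
  refine measure_mono_null ?_ (measure_iUnion_null fun k ↦
    measure_setOf_exists_mem_map_mem_range_eq_zero μ V (contDiff_normalizedProductVector k)
      (fun c _ ↦ smul_mem_range_normalizedProductVector k c) (hdim k))
  rintro U ⟨_, hv, hne, a, b, rfl⟩
  obtain ⟨k, hk⟩ : ∃ k, a k ≠ 0 := by
    by_contra! ha
    exact hne (funext fun p ↦ by simp [ha])
  exact Set.mem_iUnion.2 ⟨k, _, hv, hne, mul_mem_range_normalizedProductVector hk b⟩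

/-- for `d_A·d_B > d_A + d_B + d_E − 2` and a fixed `d_E`-dimensional subspace
`V₀` of `ℂ^{d_A} ⊗ ℂ^{d_B}`, with respect to the Haar probability measure on the unitary
group `U(d_A·d_B)` the set of unitaries `U` such that `U(V₀)` contains a nonzero product
vector `a ⊗ b` has measure zero. -/
theorem stmt1 (dA dB dE : ℕ) (h : dA + dB + dE - 2 < dA * dB)
    (V₀ : Submodule ℂ (Fin dA × Fin dB → ℂ)) (hV₀ : Module.finrank ℂ V₀ = dE)
    (μ : Measure (Matrix.unitaryGroup (Fin dA × Fin dB) ℂ))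
    [μ.IsHaarMeasure] [IsProbabilityMeasure μ] :
    μ {U : Matrix.unitaryGroup (Fin dA × Fin dB) ℂ |
        ∃ v ∈ V₀.map (Matrix.mulVecLin (U : Matrix (Fin dA × Fin dB) (Fin dA × Fin dB) ℂ)),
          v ≠ 0 ∧ ∃ (a : Fin dA → ℂ) (b : Fin dB → ℂ), v = fun p => a p.1 * b p.2} = 0 :=
  stmt1_general V₀ (by simp only [Fintype.card_fin]; omega) μ
end

section
/- Let d_A, d_B, d_E be natural numbers with 1 ≤ d_E ≤ (d_A − 1)·(d_B − 1). Then there exists a linear subspace of the space of d_A × d_B complex matrices of dimension d_E that contains no nonzero matrix of rank at most 1. -/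
open Matrix

/-
Send the matrix unit `E i j` to `X ^ (i + j)`. This linear map takes values in the polynomials of
degree less than `dA + dB - 1`, so its kernel has dimension at least `(dA - 1) * (dB - 1)`. It takes
an outer product `u vᵀ` to the product of the polynomials with coefficient vectors `u` and `v`, and
since the polynomial ring is a domain, the kernel contains no nonzero matrix of rank at most 1.
-/

open Module Polynomial

universe u

theorem exists_submodule_le_finrank_eq {R M : Type*} [Semiring R] [StrongRankCondition R]
    [AddCommMonoid M] [Module R M] {W : Submodule R M} {d : ℕ} (h : d ≤ finrank R W) :
    ∃ V ≤ W, finrank R V = d := by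
  have := nontrivial_of_invariantBasisNumber R
  obtain ⟨f, hf⟩ := exists_linearIndependent_of_le_finrank h
  refine ⟨(Submodule.span R (Set.range f)).map W.subtype, Submodule.map_subtype_le _ _, ?_⟩
  rw [Submodule.finrank_map_subtype_eq, finrank_span_eq_card hf, Fintype.card_fin]

theorem finrank_degreeLT (R : Type*) [Semiring R] [StrongRankCondition R] (n : ℕ) :
    finrank R (degreeLT R n) = n := by
  rw [finrank_eq_card_basis (degreeLT.basis R n), Fintype.card_fin]

section RankLeOne

variable {m n R : Type*} [Fintype n] [CommRing R] [IsDomain R] {M : Matrix m n R}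

theorem apply_mul_apply_eq_of_rank_le_one (hM : M.rank ≤ 1) (i k : m) (j l : n) :
    M i j * M k l = M i l * M k j := by
  have minor_eq_zero : (M.submatrix ![i, k] ![j, l]).det = 0 := by
    by_contra hdet
    have rank_minor : (M.submatrix ![i, k] ![j, l]).rank = 2 := by
      rw [rank_of_det_ne_zero hdet, Fintype.card_fin]
    have := rank_submatrix_le M ![i, k] ![j, l]
    lia
  rw [det_fin_two] at minor_eq_zero
  exact sub_eq_zero.mp minor_eq_zero

theorem apply_smul_eq_vecMulVec_of_rank_le_one (hM : M.rank ≤ 1) (i : m) (j : n) :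
    M i j • M = vecMulVec (M.col j) (M.row i) := by
  ext k l
  simpa [vecMulVec_apply, mul_comm] using apply_mul_apply_eq_of_rank_le_one hM i k j l

end RankLeOne

section Semiring

variable {R : Type*} [Semiring R] {a b : ℕ}

/-- The polynomial whose coefficients are the antidiagonal sums of a matrix, with indices counted
from `0`, as a linear function of the matrix. Its kernel is the subspace used to avoid the matrices
of rank at most 1. -/
noncomputable def antidiagonalPoly : Matrix (Fin a) (Fin b) R →ₗ[R] R[X] :=
  ∑ i : Fin a, ∑ j : Fin b, monomial (i + j : ℕ) ∘ₗ entryLinearMap R R i j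

theorem antidiagonalPoly_apply (M : Matrix (Fin a) (Fin b) R) :
    antidiagonalPoly M = ∑ i : Fin a, ∑ j : Fin b, monomial (i + j : ℕ) (M i j) := by
  simp [antidiagonalPoly]

theorem antidiagonalPoly_vecMulVec [DecidableEq R] (u : Fin a → R) (v : Fin b → R) :
    antidiagonalPoly (vecMulVec u v) = ofFn a u * ofFn b v := by
  simp only [antidiagonalPoly_apply, vecMulVec_apply, ofFn_eq_sum_monomial, Finset.sum_mul_sum,
    monomial_mul_monomial]

theorem antidiagonalPoly_mem_degreeLT (M : Matrix (Fin a) (Fin b) R) :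
    antidiagonalPoly M ∈ degreeLT R (a + b - 1) := by
  rw [antidiagonalPoly_apply]
  refine Submodule.sum_mem _ fun i _ => Submodule.sum_mem _ fun j _ => ?_
  have exponent_lt : (i + j : ℕ) < a + b - 1 := by lia
  exact mem_degreeLT.mpr ((degree_monomial_le _ _).trans_lt (by exact_mod_cast exponent_lt))

end Semiring

theorem finrank_range_antidiagonalPoly_le (R : Type*) [Semiring R] [StrongRankCondition R]
    (a b : ℕ) :
    finrank R (antidiagonalPoly (R := R) (a := a) (b := b)).range ≤ a + b - 1 := by
  have : Module.Finite R (degreeLT R (a + b - 1)) := .of_basis (degreeLT.basis R _)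
  calc finrank R (antidiagonalPoly (R := R) (a := a) (b := b)).range
      ≤ finrank R (degreeLT R (a + b - 1)) :=
        Submodule.finrank_mono (by
          rintro _ ⟨M, rfl⟩
          exact antidiagonalPoly_mem_degreeLT M)
    _ = a + b - 1 := finrank_degreeLT R _

theorem le_finrank_ker_antidiagonalPoly (R : Type u) [Ring R] [StrongRankCondition R]
    [HasRankNullity.{u} R] (a b : ℕ) :
    (a - 1) * (b - 1) ≤ finrank R (antidiagonalPoly (R := R) (a := a) (b := b)).ker := by
  let L : Matrix (Fin a) (Fin b) R →ₗ[R] R[X] := antidiagonalPoly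
  have range_le : finrank R L.range ≤ a + b - 1 := finrank_range_antidiagonalPoly_le R a b
  have rank_nullity : finrank R L.range + finrank R L.ker = a * b := by
    rw [← L.quotKerEquivRange.finrank_eq, L.ker.finrank_quotient_add_finrank, finrank_matrix,
      finrank_self, Fintype.card_fin, Fintype.card_fin, mul_one]
  rcases a with _ | a
  · simp
  rcases b with _ | b
  · simp
  change a * b ≤ finrank R L.ker
  lia

theorem eq_zero_of_antidiagonalPoly_eq_zero_of_rank_le_one {R : Type*} [CommRing R] [IsDomain R]
    {a b : ℕ} {M : Matrix (Fin a) (Fin b) R} (hM : antidiagonalPoly M = 0) (hr : M.rank ≤ 1) :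
    M = 0 := by
  classical
  ext i j
  have product_eq_zero : ofFn a (M.col j) * ofFn b (M.row i) = 0 := by
    rw [← antidiagonalPoly_vecMulVec, ← apply_smul_eq_vecMulVec_of_rank_le_one hr, map_smul, hM,
      smul_zero]
  rcases mul_eq_zero.mp product_eq_zero with hcol | hrow
  · exact congrFun ((map_eq_zero_iff _ (injective_ofFn a)).mp hcol) i
  · exact congrFun ((map_eq_zero_iff _ (injective_ofFn b)).mp hrow) j

theorem stmt2_general {R : Type*} [CommRing R] [IsDomain R] {dA dB dE : ℕ}
    (h : dE ≤ (dA - 1) * (dB - 1)) :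
    ∃ V : Submodule R (Matrix (Fin dA) (Fin dB) R),
      finrank R V = dE ∧ ∀ M ∈ V, M ≠ 0 → ¬ (M.rank ≤ 1) := by
  obtain ⟨V, V_le_ker, finrank_V⟩ :=
    exists_submodule_le_finrank_eq (h.trans (le_finrank_ker_antidiagonalPoly R dA dB))
  exact ⟨V, finrank_V, fun M hMV hM hr =>
    hM (eq_zero_of_antidiagonalPoly_eq_zero_of_rank_le_one (V_le_ker hMV) hr)⟩

/-- If `1 ≤ d_E ≤ (d_A - 1)(d_B - 1)` then there is a subspace of the
`d_A × d_B` complex matrices of dimension `d_E` containing no nonzero matrix of rank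
at most 1. -/
theorem stmt2 (dA dB dE : ℕ) (h1 : 1 ≤ dE) (h2 : dE ≤ (dA - 1) * (dB - 1)) :
    ∃ V : Submodule ℂ (Matrix (Fin dA) (Fin dB) ℂ),
      Module.finrank ℂ V = dE ∧
      ∀ M ∈ V, M ≠ 0 → ¬ (M.rank ≤ 1) :=
  stmt2_general h2
end

section
/- Let ω = e^{2πi/3}. Define twelve 3 × 4 complex matrices: R₁ = [[0,0,0,0],[1,0,0,0],[0,1,0,0]], R₂ = [[1,0,0,0],[0,1,0,0],[0,0,1,0]], R₃ = [[1,0,0,0],[0,ω,0,0],[0,0,ω²,0]], R₄ = [[0,1,0,0],[0,0,ω²,0],[0,0,0,ω]], R₅ = [[0,0,1,0],[0,0,0,−1],[0,0,0,0]], R₆ = [[0,0,0,1],[0,0,0,0],[−1,0,0,0]], and S₁ = [[0,0,0,0],[1,0,0,0],[0,−1,0,0]], S₂ = [[1,0,0,0],[0,ω²,0,0],[0,0,ω,0]], S₃ = [[0,1,0,0],[0,0,1,0],[0,0,0,1]], S₄ = [[0,1,0,0],[0,0,ω,0],[0,0,0,ω²]], S₅ = [[0,0,1,0],[0,0,0,1],[0,0,0,0]],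 S₆ = [[0,0,0,1],[0,0,0,0],[1,0,0,0]]. Let R = span{R₁,…,R₆} and S = span{S₁,…,S₆}. Then: (i) dim R = dim S = 6; (ii) R and S are orthogonal with respect to the Frobenius inner product; and (iii) neither R nor S contains a nonzero matrix of rank at most 1. -/
open Matrix

/-!
Reversing the rows and the columns of a matrix and multiplying by checkerboard signs does not
change its rank, and it carries `S`, built from `ω`, onto `R`, built from `ω²`; so ranks have to be
studied in `R` only. If an element of `R` with coefficients `a, …, f` has rank at most one, then
three of its `2 × 2` minors express `e * a` as `d` times a linear form in `b` and `c`; comparing the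
three forms gives `d * b = d * c = 0`, and a fourth minor turns this into `d ^ 3 = 0`. With `d = 0`
further minors give `e ^ 2 = 0`, `f ^ 2 = 0` and then `a ^ 2 = 0`, and what is left is a diagonal
with entries `b + c`, `b + ω c`, `b + ω² c`, any two of which have product zero. Linear
independence of the generators comes for free, since the zero matrix has rank at most one.
-/

section RankLeOne

lemma mul_eq_mul_of_rank_le_one {K m n : Type*} [Field K] [Fintype n] {M : Matrix m n K}
    (hM : M.rank ≤ 1) (i j : m) (k l : n) : M i k * M j l = M i l * M j k := by
  by_contra hne
  have hunit : IsUnit (M.submatrix ![i, j] ![k, l]) := by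
    rw [isUnit_iff_isUnit_det, isUnit_iff_ne_zero, det_fin_two]
    simpa [sub_eq_zero] using hne
  have hrank : (M.submatrix ![i, j] ![k, l]).rank = 2 := rank_of_isUnit _ hunit
  have hle := rank_submatrix_le M ![i, j] ![k, l]
  omega

variable {A m n ι : Type*} [CommRing A] [Fintype n] [Fintype ι] {v : ι → Matrix m n A}

lemma linearIndependent_of_rank_le_one_imp [Nontrivial A]
    (hv : ∀ g : ι → A, (∑ i, g i • v i).rank ≤ 1 → g = 0) : LinearIndependent A v :=
  Fintype.linearIndependent_iff.2 fun g hg => congrFun (hv g (by simp [hg]))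

lemma not_rank_le_one_of_mem_span_range
    (hv : ∀ g : ι → A, (∑ i, g i • v i).rank ≤ 1 → g = 0) {M : Matrix m n A}
    (hM : M ∈ Submodule.span A (Set.range v)) (hM0 : M ≠ 0) : ¬ M.rank ≤ 1 := by
  obtain ⟨g, rfl⟩ := (Submodule.mem_span_range_iff_exists_fun A).1 hM
  intro hrank
  exact hM0 (by simp [hv g hrank])

end RankLeOne

section SignedReverse

variable {A : Type*} [CommRing A] {m n : ℕ}

/-- The matrix `M` rotated by a half turn, with its `(i, j)` entry then multiplied by the
checkerboard sign `(-1) ^ (i + j)`. It is written as a product with two diagonal sign matrices, so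
that its rank can be read off. -/
def signedReverse (M : Matrix (Fin m) (Fin n) A) : Matrix (Fin m) (Fin n) A :=
  diagonal (fun i : Fin m => (-1 : A) ^ (i : ℕ)) * M.submatrix Fin.rev Fin.rev *
    diagonal (fun j : Fin n => (-1 : A) ^ (j : ℕ))

lemma signedReverse_apply (M : Matrix (Fin m) (Fin n) A) (i : Fin m) (j : Fin n) :
    signedReverse M i j = (-1) ^ (i : ℕ) * M i.rev j.rev * (-1) ^ (j : ℕ) := by
  simp [signedReverse]

lemma isUnit_det_diagonal_neg_one_pow :
    IsUnit (diagonal fun i : Fin n => (-1 : A) ^ (i : ℕ)).det := by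
  rw [det_diagonal, Finset.prod_pow_eq_pow_sum]
  exact isUnit_neg_one.pow _

lemma rank_signedReverse (M : Matrix (Fin m) (Fin n) A) : (signedReverse M).rank = M.rank := by
  rw [signedReverse, rank_mul_eq_left_of_isUnit_det _ _ isUnit_det_diagonal_neg_one_pow,
    rank_mul_eq_right_of_isUnit_det _ _ isUnit_det_diagonal_neg_one_pow]
  exact rank_submatrix M Fin.revPerm Fin.revPerm

end SignedReverse

section CubeRoot

variable {A : Type*} [CommRing A] [IsDomain A] {ω : A}

lemma sq_add_self_add_one_eq_zero (hω : IsPrimitiveRoot ω 3) : ω ^ 2 + ω + 1 = 0 := by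
  have hsum := hω.geom_sum_eq_zero (by norm_num)
  simp only [Finset.sum_range_succ, Finset.sum_range_zero] at hsum
  linear_combination hsum

lemma eq_zero_of_pairwise_mul_eq_zero (hω : IsPrimitiveRoot ω 3) {x y : A}
    (h₀₁ : (x + y) * (x + ω * y) = 0) (h₀₂ : (x + y) * (x + ω ^ 2 * y) = 0)
    (h₁₂ : (x + ω * y) * (x + ω ^ 2 * y) = 0) : x = 0 ∧ y = 0 := by
  have hsum : (x + y) + ω * (x + ω * y) + ω ^ 2 * (x + ω ^ 2 * y) = 0 := by
    linear_combination (x + y * (ω ^ 2 - ω + 1)) * sq_add_self_add_one_eq_zero hω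
  have hu : x + y = 0 := by
    have hsq : (x + y) ^ 2 = 0 := by linear_combination (x + y) * hsum - ω * h₀₁ - ω ^ 2 * h₀₂
    simpa using hsq
  have hv : x + ω * y = 0 := by
    have hmul : ω * (x + ω * y) ^ 2 = 0 := by
      linear_combination (x + ω * y) * hsum - h₀₁ - ω ^ 2 * h₁₂
    simpa [hω.ne_zero three_ne_zero] using hmul
  have hy : y = 0 := by
    have hω1 : ω - 1 ≠ 0 := sub_ne_zero.2 (hω.ne_one (by norm_num))
    have hmul : (ω - 1) * y = 0 := by linear_combination hv - hu
    simpa [hω1] using hmul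
  exact ⟨by simpa [hy] using hu, hy⟩

end CubeRoot

section Families

variable {A : Type*} [CommRing A]

/-- The generators `R₁, …, R₆`, for an arbitrary parameter `ω`. -/
def familyR (ω : A) : Fin 6 → Matrix (Fin 3) (Fin 4) A :=
  ![!![0,0,0,0; 1,0,0,0; 0,1,0,0],
    !![1,0,0,0; 0,1,0,0; 0,0,1,0],
    !![1,0,0,0; 0,ω,0,0; 0,0,ω^2,0],
    !![0,1,0,0; 0,0,ω^2,0; 0,0,0,ω],
    !![0,0,1,0; 0,0,0,-1; 0,0,0,0],
    !![0,0,0,1; 0,0,0,0; -1,0,0,0]]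

/-- The generators `S₁, …, S₆`, for an arbitrary parameter `ω`. -/
def familyS (ω : A) : Fin 6 → Matrix (Fin 3) (Fin 4) A :=
  ![!![0,0,0,0; 1,0,0,0; 0,-1,0,0],
    !![1,0,0,0; 0,ω^2,0,0; 0,0,ω,0],
    !![0,1,0,0; 0,0,1,0; 0,0,0,1],
    !![0,1,0,0; 0,0,ω,0; 0,0,0,ω^2],
    !![0,0,1,0; 0,0,0,1; 0,0,0,0],
    !![0,0,0,1; 0,0,0,0; 1,0,0,0]]

/-- The element of the span of `R₁, …, R₆` with coefficients `a, …, f`. -/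
def combR (ω a b c d e f : A) : Matrix (Fin 3) (Fin 4) A :=
  !![b + c, d,         e,             f;
     a,     b + ω * c, ω ^ 2 * d,     -e;
     -f,    a,         b + ω ^ 2 * c, ω * d]

/-- The element of the span of `S₁, …, S₆` with coefficients `a, …, f`. -/
def combS (ω a b c d e f : A) : Matrix (Fin 3) (Fin 4) A :=
  !![b, c + d,     e,         f;
     a, ω ^ 2 * b, c + ω * d, e;
     f, -a,        ω * b,     c + ω ^ 2 * d]

lemma sum_smul_familyR (ω : A) (g : Fin 6 → A) :
    ∑ i, g i • familyR ω i = combR ω (g 0) (g 1) (g 2) (g 3) (g 4) (g 5) := by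
  ext i j
  fin_cases i <;> fin_cases j <;> simp [familyR, combR, Fin.sum_univ_six, mul_comm]

lemma sum_smul_familyS (ω : A) (g : Fin 6 → A) :
    ∑ i, g i • familyS ω i = combS ω (g 0) (g 1) (g 2) (g 3) (g 4) (g 5) := by
  ext i j
  fin_cases i <;> fin_cases j <;> simp [familyS, combS, Fin.sum_univ_six, mul_comm]

lemma signedReverse_combS {ω : A} (hω : ω ^ 3 = 1) (a b c d e f : A) :
    signedReverse (combS ω a b c d e f) =
      combR (ω ^ 2) (-e) c (ω ^ 2 * d) (-(ω * b)) (-a) (-f) := by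
  ext i j
  rw [signedReverse_apply]
  fin_cases i <;> fin_cases j <;> simp [combS, combR, Fin.rev] <;> grind

lemma trace_conjTranspose_combR_mul_combS [StarRing A] {ω : A} (hω : ω ^ 2 + ω + 1 = 0)
    (hstar : star ω = ω ^ 2) (a b c d e f a₁ b₁ c₁ d₁ e₁ f₁ : A) :
    ((combR ω a b c d e f)ᴴ * combS ω a₁ b₁ c₁ d₁ e₁ f₁).trace = 0 := by
  -- The products of `a`, `e`, `f` with `a₁`, `e₁`, `f₁` occur twice each, with opposite signs.
  have htrace : ((combR ω a b c d e f)ᴴ * combS ω a₁ b₁ c₁ d₁ e₁ f₁).trace =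
      star b * b₁ * (1 + ω ^ 2 + ω) + star c * b₁ * (1 + ω ^ 4 + ω ^ 5) +
        star d * c₁ * (1 + ω ^ 4 + ω ^ 2) + star d * d₁ * (1 + ω ^ 5 + ω ^ 4) := by
    simp only [combR, combS, trace, diag_apply, mul_apply, conjTranspose_apply, of_apply, cons_val,
      Fin.sum_univ_three, Fin.sum_univ_four, star_add, star_mul', star_pow, star_neg, hstar]
    ring
  rw [htrace]
  linear_combination (star b * b₁ + (ω ^ 3 - ω + 1) * (star c * b₁ + star d * d₁)
    + (ω ^ 2 - ω + 1) * (star d * c₁)) * hω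

end Families

section Rank

variable {K : Type*} [Field K] [NeZero (2 : K)] {ω a b c d e f : K}

lemma coeff_d_eq_zero_of_rank_combR_le_one (hω : IsPrimitiveRoot ω 3)
    (h : (combR ω a b c d e f).rank ≤ 1) : d = 0 := by
  have hω0 : ω ≠ 0 := hω.ne_zero three_ne_zero
  have minor := mul_eq_mul_of_rank_le_one h
  have hea₀ : ω ^ 2 * d * (b + c) = e * a := by
    simpa [combR, mul_comm] using minor 0 1 0 2
  have hea₁ : ω * d * (b + ω * c) = -(e * a) := by
    simpa [combR, mul_comm] using minor 1 2 1 3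
  have hea₂ : d * (b + ω ^ 2 * c) = e * a := by
    simpa [combR] using minor 0 2 1 2
  have hdd : d * (ω ^ 2 * d) = e * (b + ω * c) := by
    simpa [combR] using minor 0 1 1 2
  have hdb : d * b = 0 := by
    have hω2 : ω ^ 2 - 1 ≠ 0 :=
      sub_ne_zero.2 (hω.pow_ne_one_of_pos_of_lt two_ne_zero (by norm_num))
    have hmul : (ω ^ 2 - 1) * (d * b) = 0 := by linear_combination hea₀ - hea₂
    exact (mul_eq_zero.1 hmul).resolve_left hω2
  have hdc : d * c = 0 := by
    have hmul : 2 * ω ^ 2 * (d * c) = 0 := by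
      linear_combination hea₁ + hea₂ - (ω + 1) * hdb
    simpa [hω0, two_ne_zero] using hmul
  have hd : ω ^ 2 * d ^ 3 = 0 := by
    linear_combination d * hdd + e * hdb + ω * e * hdc
  simpa [hω0] using hd

lemma coeffs_eq_zero_of_rank_combR_le_one (hω : IsPrimitiveRoot ω 3)
    (h : (combR ω a b c d e f).rank ≤ 1) :
    a = 0 ∧ b = 0 ∧ c = 0 ∧ d = 0 ∧ e = 0 ∧ f = 0 := by
  obtain rfl : d = 0 := coeff_d_eq_zero_of_rank_combR_le_one hω h
  have minor := mul_eq_mul_of_rank_le_one h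
  obtain rfl : e = 0 := by simpa [combR] using minor 0 1 2 3
  obtain rfl : f = 0 := by simpa [combR] using minor 0 2 0 3
  obtain rfl : a = 0 := by simpa [combR] using minor 1 2 0 1
  obtain ⟨rfl, rfl⟩ : b = 0 ∧ c = 0 := eq_zero_of_pairwise_mul_eq_zero hω
    (by simpa [combR] using minor 0 1 0 1) (by simpa [combR] using minor 0 2 0 2)
    (by simpa [combR] using minor 1 2 1 2)
  simp

lemma coeffs_eq_zero_of_rank_combS_le_one (hω : IsPrimitiveRoot ω 3)
    (h : (combS ω a b c d e f).rank ≤ 1) :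
    a = 0 ∧ b = 0 ∧ c = 0 ∧ d = 0 ∧ e = 0 ∧ f = 0 := by
  have hω0 : ω ≠ 0 := hω.ne_zero three_ne_zero
  rw [← rank_signedReverse, signedReverse_combS hω.pow_eq_one] at h
  have hω2 : IsPrimitiveRoot (ω ^ 2) 3 := hω.pow_of_coprime 2 (by norm_num)
  obtain ⟨he, hc, hd, hb, ha, hf⟩ := coeffs_eq_zero_of_rank_combR_le_one hω2 h
  simp only [neg_eq_zero, mul_eq_zero, pow_eq_zero_iff two_ne_zero, hω0, false_or] at he hd hb ha hf
  exact ⟨ha, hb, hc, hd, he, hf⟩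

lemma eq_zero_of_rank_sum_smul_familyR_le_one (hω : IsPrimitiveRoot ω 3) (g : Fin 6 → K)
    (h : (∑ i, g i • familyR ω i).rank ≤ 1) : g = 0 := by
  rw [sum_smul_familyR] at h
  simpa [funext_iff, Fin.forall_fin_succ] using coeffs_eq_zero_of_rank_combR_le_one hω h

lemma eq_zero_of_rank_sum_smul_familyS_le_one (hω : IsPrimitiveRoot ω 3) (g : Fin 6 → K)
    (h : (∑ i, g i • familyS ω i).rank ≤ 1) : g = 0 := by
  rw [sum_smul_familyS] at h
  simpa [funext_iff, Fin.forall_fin_succ] using coeffs_eq_zero_of_rank_combS_le_one hω h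

end Rank

lemma range_vecCons_six {α : Type*} (a b c d e f : α) :
    Set.range ![a, b, c, d, e, f] = {a, b, c, d, e, f} := by
  simp only [range_cons, range_empty, Set.union_empty, Set.singleton_union]

lemma star_eq_pow_sub_one_of_pow_eq_one {z : ℂ} {n : ℕ} (hn : n ≠ 0) (hz : z ^ n = 1) :
    star z = z ^ (n - 1) :=
  calc star z = z⁻¹ := (Complex.inv_eq_conj (Complex.norm_eq_one_of_pow_eq_one hz hn)).symm
    _ = z ^ (n - 1) := inv_eq_of_mul_eq_one_left (by rw [pow_sub_one_mul hn, hz])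

theorem stmt3_general {K : Type*} [Field K] [NeZero (2 : K)] [StarRing K] {ω : K}
    (hω : IsPrimitiveRoot ω 3) (hstar : star ω = ω ^ 2) :
    let R := Submodule.span K (Set.range (familyR ω))
    let S := Submodule.span K (Set.range (familyS ω))
    Module.finrank K R = 6 ∧ Module.finrank K S = 6 ∧
    (∀ M ∈ R, ∀ N ∈ S, (Mᴴ * N).trace = 0) ∧
    (∀ M ∈ R, M ≠ 0 → ¬ (M.rank ≤ 1)) ∧
    (∀ N ∈ S, N ≠ 0 → ¬ (N.rank ≤ 1)) := by
  intro R S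
  have hR := eq_zero_of_rank_sum_smul_familyR_le_one hω
  have hS := eq_zero_of_rank_sum_smul_familyS_le_one hω
  have horth : ∀ M ∈ R, ∀ N ∈ S, (Mᴴ * N).trace = 0 := by
    simp only [R, S, Submodule.mem_span_range_iff_exists_fun, sum_smul_familyR,
      sum_smul_familyS]
    rintro _ ⟨g, rfl⟩ _ ⟨h, rfl⟩
    exact trace_conjTranspose_combR_mul_combS (sq_add_self_add_one_eq_zero hω) hstar ..
  exact ⟨finrank_span_eq_card (linearIndependent_of_rank_le_one_imp hR),
    finrank_span_eq_card (linearIndependent_of_rank_le_one_imp hS), horth,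
    fun M => not_rank_le_one_of_mem_span_range hR, fun N => not_rank_le_one_of_mem_span_range hS⟩

/-- with `ω = e^{2πi/3}`, the spans `R` and `S` of the two given families of
six `3 × 4` complex matrices each have dimension 6, are mutually orthogonal with respect
to the Frobenius inner product `⟨M,N⟩ = tr(Mᴴ N)`, and neither contains a nonzero matrix
of rank at most 1. -/
theorem stmt3 (ω : ℂ) (hω : ω = Complex.exp (2 * Real.pi * Complex.I / 3)) :
    let R : Submodule ℂ (Matrix (Fin 3) (Fin 4) ℂ) := Submodule.span ℂ
      {!![0,0,0,0; 1,0,0,0; 0,1,0,0],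
       !![1,0,0,0; 0,1,0,0; 0,0,1,0],
       !![1,0,0,0; 0,ω,0,0; 0,0,ω^2,0],
       !![0,1,0,0; 0,0,ω^2,0; 0,0,0,ω],
       !![0,0,1,0; 0,0,0,-1; 0,0,0,0],
       !![0,0,0,1; 0,0,0,0; -1,0,0,0]}
    let S : Submodule ℂ (Matrix (Fin 3) (Fin 4) ℂ) := Submodule.span ℂ
      {!![0,0,0,0; 1,0,0,0; 0,-1,0,0],
       !![1,0,0,0; 0,ω^2,0,0; 0,0,ω,0],
       !![0,1,0,0; 0,0,1,0; 0,0,0,1],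
       !![0,1,0,0; 0,0,ω,0; 0,0,0,ω^2],
       !![0,0,1,0; 0,0,0,1; 0,0,0,0],
       !![0,0,0,1; 0,0,0,0; 1,0,0,0]}
    Module.finrank ℂ R = 6 ∧ Module.finrank ℂ S = 6 ∧
    (∀ M ∈ R, ∀ N ∈ S, (Mᴴ * N).trace = 0) ∧
    (∀ M ∈ R, M ≠ 0 → ¬ (M.rank ≤ 1)) ∧
    (∀ N ∈ S, N ≠ 0 → ¬ (N.rank ≤ 1)) := by
  have hprim : IsPrimitiveRoot ω 3 := hω ▸ Complex.isPrimitiveRoot_exp 3 three_ne_zero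
  rw [← range_vecCons_six, ← range_vecCons_six]
  exact stmt3_general hprim (star_eq_pow_sub_one_of_pow_eq_one three_ne_zero hprim.pow_eq_one)
end

section
/- Let ω = e^{2πi/3} and let R₀ be the span of the five 3 × 4 complex matrices R₁ = [[0,0,0,0],[1,0,0,0],[0,1,0,0]], R₂ = [[1,0,0,0],[0,1,0,0],[0,0,1,0]], R₃ = [[1,0,0,0],[0,ω,0,0],[0,0,ω²,0]], R₄ = [[0,1,0,0],[0,0,ω²,0],[0,0,0,ω]], R₅ = [[0,0,1,0],[0,0,0,−1],[0,0,0,0]]. Then R₀ contains no nonzero matrix of rank at most 1. -/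
open Matrix

/-!
Every element of the span is supported on four diagonals. On each of the three off-diagonals, all
entries are multiples of one coefficient, and some `2 × 2` minor is, up to sign and a power of `ω`,
the square of that coefficient; so rank at most one forces it to vanish. The main diagonal
`b + c, b + c ω, b + c ω²`, coming from `b R₂ + c R₃`, satisfies a linear relation with coefficients
`ω`, `-(1 + ω)`, `1`, all nonzero. Rank at most one kills two of its three entries, and the relation
kills the third.
-/

section Minors

variable {m n R : Type*} [Fintype n] [CommRing R] [IsDomain R]

theorem det_submatrix_eq_zero_of_rank_lt {ι : Type*} [Fintype ι] [DecidableEq ι]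
    {M : Matrix m n R} (hM : M.rank < Fintype.card ι) (r : ι → m) (c : ι → n) :
    (M.submatrix r c).det = 0 := by
  by_contra hdet
  exact hM.not_ge (rank_of_det_ne_zero hdet ▸ M.rank_submatrix_le r c)

theorem mul_apply_eq_mul_apply_of_rank_le_one {M : Matrix m n R} (hM : M.rank ≤ 1)
    (i k : m) (j l : n) : M i j * M k l = M i l * M k j := by
  have hminor : (M.submatrix ![i, k] ![j, l]).det = 0 :=
    det_submatrix_eq_zero_of_rank_lt (by simpa using Nat.lt_succ_of_le hM) _ _
  rw [det_fin_two, sub_eq_zero] at hminor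
  simpa only [submatrix_apply, cons_val_zero, cons_val_one] using hminor

end Minors

theorem eq_zero_of_pairwise_mul_eq_zero_of_linear_relation {R : Type*}
    [NonUnitalNonAssocSemiring R] [NoZeroDivisors R] {α β γ x y z : R}
    (hα : α ≠ 0) (hβ : β ≠ 0) (hγ : γ ≠ 0)
    (hrel : α * x + γ * z = β * y) (hxy : x * y = 0) (hxz : x * z = 0) (hyz : y * z = 0) :
    x = 0 ∧ y = 0 ∧ z = 0 := by
  rcases mul_eq_zero.mp hxy with rfl | rfl
  · rcases mul_eq_zero.mp hyz with rfl | rfl <;> simp_all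
  · rcases mul_eq_zero.mp hxz with rfl | rfl <;> simp_all

section Band

variable {R : Type*} [CommRing R]

/-- The generators `R₁, …, R₅` of the subspace `R₀`, with an arbitrary ring element `ω` in place of
the primitive cube root of unity. -/
def bandGenerators (ω : R) : Set (Matrix (Fin 3) (Fin 4) R) :=
  {!![0,0,0,0; 1,0,0,0; 0,1,0,0],
   !![1,0,0,0; 0,1,0,0; 0,0,1,0],
   !![1,0,0,0; 0,ω,0,0; 0,0,ω^2,0],
   !![0,1,0,0; 0,0,ω^2,0; 0,0,0,ω],
   !![0,0,1,0; 0,0,0,-1; 0,0,0,0]}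

/-- The shape of a general element of `R₀`. The main diagonal `x, y, z` is left free here;
membership in `R₀` adds the relation `ω * x + z = (1 + ω) * y`. -/
def bandMatrix (ω a x y z d e : R) : Matrix (Fin 3) (Fin 4) R :=
  !![x, d, e, 0;
     a, y, ω ^ 2 * d, -e;
     0, a, z, ω * d]

theorem exists_eq_bandMatrix_of_mem_span {ω : R} {M : Matrix (Fin 3) (Fin 4) R}
    (hM : M ∈ Submodule.span R (bandGenerators ω)) :
    ∃ a x y z d e, ω * x + z = (1 + ω) * y ∧ M = bandMatrix ω a x y z d e := by
  simp only [bandGenerators, Submodule.mem_span_insert, Submodule.mem_span_singleton] at hM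
  obtain ⟨a, _, ⟨b, _, ⟨c, _, ⟨d, _, ⟨e, rfl⟩, rfl⟩, rfl⟩, rfl⟩, rfl⟩ := hM
  refine ⟨a, b + c, b + c * ω, b + c * ω ^ 2, d, e, by ring, ?_⟩
  ext i j
  fin_cases i <;> fin_cases j <;> simp [bandMatrix, mul_comm]

theorem bandMatrix_eq_zero_of_rank_le_one [IsDomain R] {ω a x y z d e : R} (hω₀ : ω ≠ 0)
    (hω₁ : ω ≠ -1) (hrel : ω * x + z = (1 + ω) * y)
    (hrank : (bandMatrix ω a x y z d e).rank ≤ 1) : bandMatrix ω a x y z d e = 0 := by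
  have minor := mul_apply_eq_mul_apply_of_rank_le_one hrank
  obtain rfl : a = 0 := by simpa [bandMatrix] using minor 1 2 0 1
  obtain rfl : d = 0 := by simpa [bandMatrix, hω₀] using minor 0 2 1 3
  obtain rfl : e = 0 := by simpa [bandMatrix] using minor 0 1 2 3
  have hxy : x * y = 0 := by simpa [bandMatrix] using minor 0 1 0 1
  have hxz : x * z = 0 := by simpa [bandMatrix] using minor 0 2 0 2
  have hyz : y * z = 0 := by simpa [bandMatrix] using minor 1 2 1 2
  have hω₁' : 1 + ω ≠ 0 := fun h => hω₁ (eq_neg_of_add_eq_zero_right h)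
  obtain ⟨rfl, rfl, rfl⟩ := eq_zero_of_pairwise_mul_eq_zero_of_linear_relation hω₀ hω₁' one_ne_zero
    (by rwa [one_mul]) hxy hxz hyz
  ext i j
  fin_cases i <;> fin_cases j <;> simp [bandMatrix]

theorem stmt6_general [IsDomain R] {ω : R} (hω₀ : ω ≠ 0) (hω₁ : ω ≠ -1) :
    ∀ M ∈ Submodule.span R (bandGenerators ω), M ≠ 0 → ¬ (M.rank ≤ 1) := by
  intro M hM hne hrank
  obtain ⟨a, x, y, z, d, e, hrel, rfl⟩ := exists_eq_bandMatrix_of_mem_span hM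
  exact hne (bandMatrix_eq_zero_of_rank_le_one hω₀ hω₁ hrel hrank)

end Band

theorem ne_neg_one_of_odd_pow_eq_one {R : Type*} [Ring R] [NeZero (2 : R)] {ζ : R} {k : ℕ}
    (hk : Odd k) (hζ : ζ ^ k = 1) : ζ ≠ -1 := by
  rintro rfl
  rw [hk.neg_one_pow, neg_eq_iff_add_eq_zero, one_add_one_eq_two] at hζ
  exact two_ne_zero hζ

/-- with `ω = e^{2πi/3}`, the span `R₀` of the five given `3 × 4` complex
matrices contains no nonzero matrix of rank at most 1. -/
theorem stmt6 (ω : ℂ) (hω : ω = Complex.exp (2 * Real.pi * Complex.I / 3)) :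
    ∀ M ∈ Submodule.span ℂ
      ({!![0,0,0,0; 1,0,0,0; 0,1,0,0],
        !![1,0,0,0; 0,1,0,0; 0,0,1,0],
        !![1,0,0,0; 0,ω,0,0; 0,0,ω^2,0],
        !![0,1,0,0; 0,0,ω^2,0; 0,0,0,ω],
        !![0,0,1,0; 0,0,0,-1; 0,0,0,0]} : Set (Matrix (Fin 3) (Fin 4) ℂ)),
      M ≠ 0 → ¬ (M.rank ≤ 1) := by
  have hprim : IsPrimitiveRoot ω 3 := hω ▸ Complex.isPrimitiveRoot_exp 3 three_ne_zero
  exact stmt6_general (hprim.ne_zero three_ne_zero)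
    (ne_neg_one_of_odd_pow_eq_one (by decide) hprim.pow_eq_one)
end

section
/- Let ω = e^{2πi/3}. For all complex numbers α, β, γ, δ, ε, the 3 × 4 complex matrix M = [[β+γ, δ, ε, 1], [α, β+ωγ, ω²δ, −ε], [−1, α, β+ω²γ, ωδ]] has rank at least 2 (equivalently, M is not of rank at most 1, i.e., M does not correspond to a product vector). -/
open Matrix

/-!
If `M` had rank at most one, its top right entry `1` would force every row to be a multiple of the
top one. Comparing entries then gives `δ = -ω ε ^ 2` and `α = ε ^ 4`, shows that `ε` is a unit, and
makes the values of `β + γ x` at `x = 1, ω, ω ^ 2` equal to `-ε ^ 3, ω ε ^ 3, -ω ^ 2 ε ^ 3`.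
Weighted by `1, ω, ω ^ 2`, the values of an affine function at the cube roots of unity sum to zero,
whereas here they sum to `2 ω ^ 2 ε ^ 3`.
-/

section RankLeOne

variable {R m n k : Type*} [CommRing R] [IsDomain R] [Fintype n]

lemma card_le_rank_of_det_submatrix_ne_zero [Fintype k] [DecidableEq k] (A : Matrix m n R)
    {r : k → m} {c : k → n} (hdet : (A.submatrix r c).det ≠ 0) : Fintype.card k ≤ A.rank :=
  (rank_of_det_ne_zero hdet).ge.trans (A.rank_submatrix_le r c)

lemma mul_eq_mul_of_rank_le_one_s8 {A : Matrix m n R} (hA : A.rank ≤ 1) (i i' : m) (j j' : n) :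
    A i j * A i' j' = A i j' * A i' j := by
  by_contra hne
  have hdet : (A.submatrix ![i, i'] ![j, j']).det ≠ 0 := by
    rw [det_fin_two]
    exact sub_ne_zero.2 hne
  have hrank := card_le_rank_of_det_submatrix_ne_zero A hdet
  rw [Fintype.card_fin] at hrank
  omega

lemma eq_mul_of_rank_le_one_of_pivot {A : Matrix m n R} (hA : A.rank ≤ 1) {i₀ : m} {j₀ : n}
    (hpivot : A i₀ j₀ = 1) (i : m) (j : n) : A i j = A i j₀ * A i₀ j := by
  simpa only [hpivot, mul_one] using mul_eq_mul_of_rank_le_one_s8 hA i i₀ j j₀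

end RankLeOne

section CubeRoot

variable {R : Type*} [CommRing R] {ω : R}

lemma one_add_add_sq_eq_zero_of_isPrimitiveRoot [IsDomain R]
    (hω : IsPrimitiveRoot ω 3) : 1 + ω + ω ^ 2 = 0 := by
  simpa [Finset.sum_range_succ] using hω.geom_sum_eq_zero (by norm_num)

lemma cube_eq_one_of_one_add_add_sq_eq_zero (hω : 1 + ω + ω ^ 2 = 0) : ω ^ 3 = 1 := by
  linear_combination (ω - 1) * hω

lemma weighted_sum_affine_eq_zero (hω : 1 + ω + ω ^ 2 = 0) (b c : R) :
    (b + c) + ω * (b + ω * c) + ω ^ 2 * (b + ω ^ 2 * c) = 0 := by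
  linear_combination (b + c * (1 - ω + ω ^ 2)) * hω

end CubeRoot

/-- The general element, with sixth coefficient normalised to `1`, of the subspace constructed in
the paper: a vector of the tensor product of spaces of dimensions 3 and 4, written as a matrix so
that product vectors become the matrices of rank at most one. -/
def normalizedElement {R : Type*} [CommRing R] (ω α β γ δ ε : R) : Matrix (Fin 3) (Fin 4) R :=
  !![β + γ, δ, ε, 1;
     α, β + ω * γ, ω ^ 2 * δ, -ε;
     -1, α, β + ω ^ 2 * γ, ω * δ]

section ProportionalRows

variable {R : Type*} [CommRing R] {ω α β γ δ ε : R}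

lemma parameters_of_rows_proportional (hω : ω ^ 3 = 1)
    (hrow : ∀ i j, normalizedElement ω α β γ δ ε i j =
      normalizedElement ω α β γ δ ε i 3 * normalizedElement ω α β γ δ ε 0 j) :
    δ = -ω * ε ^ 2 ∧ α = ε ^ 4 := by
  have h₁₂ : ω ^ 2 * δ = -ε * ε := hrow 1 2
  have h₂₁ : α = ω * δ * δ := hrow 2 1
  have hδ : δ = -ω * ε ^ 2 := by linear_combination ω * h₁₂ - δ * hω
  refine ⟨hδ, ?_⟩
  rw [hδ] at h₂₁
  linear_combination h₂₁ + ε ^ 4 * hω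

lemma isUnit_and_diagonal_of_rows_proportional (hω : ω ^ 3 = 1)
    (hrow : ∀ i j, normalizedElement ω α β γ δ ε i j =
      normalizedElement ω α β γ δ ε i 3 * normalizedElement ω α β γ δ ε 0 j) :
    IsUnit ε ∧ β + γ = -ε ^ 3 ∧ β + ω * γ = ω * ε ^ 3 ∧ β + ω ^ 2 * γ = -ω ^ 2 * ε ^ 3 := by
  obtain ⟨rfl, rfl⟩ := parameters_of_rows_proportional hω hrow
  have h₁₀ : ε ^ 4 = -ε * (β + γ) := hrow 1 0
  have h₁₁ : β + ω * γ = -ε * (-ω * ε ^ 2) := hrow 1 1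
  have h₂₀ : -1 = ω * (-ω * ε ^ 2) * (β + γ) := hrow 2 0
  have h₂₂ : β + ω ^ 2 * γ = ω * (-ω * ε ^ 2) * ε := hrow 2 2
  have hε : IsUnit ε :=
    IsUnit.of_mul_eq_one (ω ^ 2 * ε * (β + γ)) (by linear_combination h₂₀)
  refine ⟨hε, hε.mul_left_cancel ?_, ?_, ?_⟩
  · linear_combination h₁₀
  · linear_combination h₁₁
  · linear_combination h₂₂

lemma two_eq_zero_of_rows_proportional (hω : 1 + ω + ω ^ 2 = 0)
    (hrow : ∀ i j, normalizedElement ω α β γ δ ε i j =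
      normalizedElement ω α β γ δ ε i 3 * normalizedElement ω α β γ δ ε 0 j) :
    (2 : R) = 0 := by
  have hω3 : ω ^ 3 = 1 := cube_eq_one_of_one_add_add_sq_eq_zero hω
  obtain ⟨hε, h₀, h₁, h₂⟩ := isUnit_and_diagonal_of_rows_proportional hω3 hrow
  have hunit : IsUnit (ω ^ 2 * ε ^ 3) :=
    ((IsUnit.of_pow_eq_one hω3 three_ne_zero).pow 2).mul (hε.pow 3)
  have hsum := weighted_sum_affine_eq_zero hω β γ
  rw [h₀, h₁, h₂] at hsum
  rw [← hunit.mul_left_eq_zero]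
  linear_combination hsum + ε ^ 3 * hω + ω * ε ^ 3 * hω3

end ProportionalRows

theorem stmt8_general {R : Type*} [CommRing R] [IsDomain R] (h2 : (2 : R) ≠ 0) {ω : R}
    (hω : 1 + ω + ω ^ 2 = 0) (α β γ δ ε : R) :
    2 ≤ (normalizedElement ω α β γ δ ε).rank := by
  by_contra hlt
  have hrank : (normalizedElement ω α β γ δ ε).rank ≤ 1 := by omega
  have hpivot : normalizedElement ω α β γ δ ε 0 3 = 1 := rfl
  exact h2 (two_eq_zero_of_rows_proportional hω (eq_mul_of_rank_le_one_of_pivot hrank hpivot))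

/-- with `ω = e^{2πi/3}`, for all complex `α β γ δ ε` the matrix
`M = [[β+γ, δ, ε, 1], [α, β+ωγ, ω²δ, −ε], [−1, α, β+ω²γ, ωδ]]` has rank at least 2. -/
theorem stmt8 (ω : ℂ) (hω : ω = Complex.exp (2 * Real.pi * Complex.I / 3))
    (α β γ δ ε : ℂ) :
    2 ≤ (!![β + γ, δ, ε, 1;
            α, β + ω * γ, ω^2 * δ, -ε;
            -1, α, β + ω^2 * γ, ω * δ] : Matrix (Fin 3) (Fin 4) ℂ).rank := by
  have hprim : IsPrimitiveRoot ω 3 := hω ▸ Complex.isPrimitiveRoot_exp 3 three_ne_zero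
  exact stmt8_general two_ne_zero (one_add_add_sq_eq_zero_of_isPrimitiveRoot hprim) α β γ δ ε
end
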